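/- Let λ be a real number with 0 < λ ≤ 8/13. If f is a close-to-convex function on the unit disk with Taylor coefficients a_k, then |λ a_4² − a_7| ≤ 7. -/

import Mathlib

open Complex Metric

/-- The k-th Taylor coefficient of `f` at `0`: `a_k = f^{(k)}(0)/k!`. -/
noncomputable def taylorCoeff (f : ℂ → ℂ) (k : ℕ) : ℂ :=
  iteratedDeriv k f 0 / (Nat.factorial k)

/-- `g` is a (normalized) starlike function on the unit disk. -/
def IsStarlikeFn (g : ℂ → ℂ) : Prop :=
  DifferentiableOn ℂ g (ball (0 : ℂ) 1) ∧ g 0 = 0 ∧ deriv g 0 = 1 ∧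
    ∀ z ∈ ball (0 : ℂ) 1 \ {0}, 0 < (z * deriv g z / g z).re

/-- `f` is a (normalized) close-to-convex function on the unit disk. -/
def IsCloseToConvex (f : ℂ → ℂ) : Prop :=
  DifferentiableOn ℂ f (ball (0 : ℂ) 1) ∧ f 0 = 0 ∧ deriv f 0 = 1 ∧
    ∃ θ : ℝ, ∃ g : ℂ → ℂ, IsStarlikeFn g ∧
      ∀ z ∈ ball (0 : ℂ) 1 \ {0},
        0 < (Complex.exp (θ * Complex.I) * z * deriv f z / g z).re


/-- Complete homogeneous symmetric polynomial in two variables. -/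
noncomputable def hsymTwo : ℕ → ℂ → ℂ → ℂ
  | 0, _, _ => 1
  | n + 1, b, c => b * hsymTwo n b c + c ^ (n + 1)

/-- Complete homogeneous symmetric polynomial in three variables. -/
noncomputable def hsymThree : ℕ → ℂ → ℂ → ℂ → ℂ
  | 0, _, _, _ => 1
  | n + 1, b, c, d => d * hsymThree n b c d + hsymTwo (n + 1) b c

lemma hsymTwo_telescope (n : ℕ) (b c : ℂ) :
    (b - c) * hsymTwo n b c = b ^ (n + 1) - c ^ (n + 1) := by
  induction n with
  | zero => simp [hsymTwo]
  | succ n ih =>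
    simp only [hsymTwo]
    linear_combination b * ih

lemma hasDerivAt_hsymTwo_ray (n : ℕ) (b c s : ℂ) :
    HasDerivAt (fun s : ℂ => s * hsymTwo n (c + s * (b - c)) c)
      ((n + 1) * (c + s * (b - c)) ^ n) s := by
  have hm : HasDerivAt (fun s : ℂ => c + s * (b - c)) (b - c) s := by
    simpa using ((hasDerivAt_id s).mul_const (b - c)).const_add c
  induction n with
  | zero => simpa [hsymTwo] using hasDerivAt_id' s
  | succ n ih =>
    have h1 := (hm.mul ih).add ((hasDerivAt_id s).mul_const (c ^ (n + 1)))
    have h2 := hsymTwo_telescope n (c + s * (b - c)) c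
    refine (h1.congr_deriv ?_).congr_of_eventuallyEq (Filter.Eventually.of_forall fun s => ?_)
    · push_cast
      linear_combination h2
    · simp only [hsymTwo, Pi.add_apply, Pi.mul_apply, id]
      ring

lemma hasDerivAt_hsymTwo_dilate (n : ℕ) (b c d s : ℂ) :
    ∃ K : ℂ, HasDerivAt
      (fun s : ℂ => hsymTwo (n + 1) (d + s * (b - d)) (d + s * (c - d))) K s ∧
      s * K = (n + 1) * hsymTwo (n + 1) (d + s * (b - d)) (d + s * (c - d))
        - (n + 2) * d * hsymTwo n (d + s * (b - d)) (d + s * (c - d)) := by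
  have hm : ∀ b : ℂ, HasDerivAt (fun s : ℂ => d + s * (b - d)) (b - d) s := by
    intro b
    simpa using ((hasDerivAt_id s).mul_const (b - d)).const_add d
  induction n with
  | zero =>
    refine ⟨(b - d) + (c - d), ?_, ?_⟩
    · refine ((hm b).add (hm c)).congr_of_eventuallyEq (Filter.Eventually.of_forall fun s => ?_)
      simp [hsymTwo]
    · simp [hsymTwo]; ring
  | succ n ih =>
    obtain ⟨K, hK, hKs⟩ := ih
    refine ⟨_, ((hm b).mul hK).add ((hm c).pow (n + 2)), ?_⟩
    simp only [hsymTwo] at hKs ⊢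
    push_cast
    linear_combination (d + s * (b - d)) * hKs

lemma hasDerivAt_hsymThree_dilate (n : ℕ) (b c d s : ℂ) :
    HasDerivAt
      (fun s : ℂ => s ^ 2 * hsymThree n (d + s * (b - d)) (d + s * (c - d)) d)
      ((n + 2) * s * hsymTwo n (d + s * (b - d)) (d + s * (c - d))) s := by
  induction n with
  | zero =>
    simpa [hsymTwo, hsymThree] using hasDerivAt_pow 2 s
  | succ n ih =>
    obtain ⟨K, hK, hKs⟩ := hasDerivAt_hsymTwo_dilate n b c d s
    have h1 := (ih.const_mul d).add ((hasDerivAt_pow 2 s).mul hK)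
    refine (h1.congr_deriv ?_).congr_of_eventuallyEq (Filter.Eventually.of_forall fun s => ?_)
    · push_cast
      linear_combination s * hKs
    · simp only [hsymThree, Pi.add_apply, Pi.mul_apply]
      ring

lemma le_of_deriv_le_aux (F F' : ℂ → ℂ) (G G' : ℝ → ℝ)
    (hF : ∀ s, HasDerivAt F (F' s) s) (hG : ∀ s, HasDerivAt G (G' s) s)
    (h : ∀ s : ℝ, 0 ≤ s → s ≤ 1 → (F' s).re ≤ G' s) (h0 : F 0 = 0) (hG0 : G 0 = 0) :
    (F 1).re ≤ G 1 := by
  have hd : ∀ s : ℝ, HasDerivAt (fun s : ℝ => G s - (F s).re) (G' s - (F' s).re) s :=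
    fun s => (hG s).sub (hF s).real_of_complex
  have hmono : MonotoneOn (fun s : ℝ => G s - (F s).re) (Set.Icc 0 1) := by
    apply monotoneOn_of_deriv_nonneg (convex_Icc 0 1)
    · exact fun s _ => (hd s).continuousAt.continuousWithinAt
    · exact fun s _ => (hd s).differentiableAt.differentiableWithinAt
    · intro s hs
      rw [interior_Icc] at hs
      rw [(hd s).deriv]
      linarith [h s hs.1.le hs.2.le]
  have := hmono (a := 0) (b := 1) (by simp) (by simp) zero_le_one
  simp [h0, hG0] at this
  linarith

lemma norm_segment_le {b c : ℂ} (hb : ‖b‖ ≤ 1) (hc : ‖c‖ ≤ 1) {s : ℝ} (h0 : 0 ≤ s)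
    (h1 : s ≤ 1) : ‖c + s * (b - c)‖ ≤ 1 := by
  have e : c + s * (b - c) = ((1 - s : ℝ) : ℂ) * c + (s : ℂ) * b := by push_cast; ring
  rw [e]
  refine (norm_add_le _ _).trans ?_
  rw [norm_mul, norm_mul, Complex.norm_of_nonneg h0, Complex.norm_of_nonneg (by linarith)]
  nlinarith

lemma simplex_avg (A6 A5 A3 A2 : ℂ) (M : ℝ)
    (h : ∀ z : ℂ, ‖z‖ ≤ 1 → (A6 * z ^ 6 + A5 * z ^ 5 + A3 * z ^ 3 + A2 * z ^ 2).re ≤ M)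
    (b c d : ℂ) (hb : ‖b‖ ≤ 1) (hc : ‖c‖ ≤ 1) (hd : ‖d‖ ≤ 1) :
    (A6 * (hsymThree 6 b c d / 28) + A5 * (hsymThree 5 b c d / 21)
      + A3 * (hsymThree 3 b c d / 10) + A2 * (hsymThree 2 b c d / 6)).re ≤ M := by
  have inner : ∀ b c : ℂ, ‖b‖ ≤ 1 → ‖c‖ ≤ 1 →
      (A6 / 7 * hsymTwo 6 b c + A5 / 6 * hsymTwo 5 b c
      + A3 / 4 * hsymTwo 3 b c + A2 / 3 * hsymTwo 2 b c).re ≤ M := by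
    intro b c hb hc
    have hD := fun s : ℂ => ((((hasDerivAt_hsymTwo_ray 6 b c s).const_mul (A6 / 7)).add
      ((hasDerivAt_hsymTwo_ray 5 b c s).const_mul (A5 / 6))).add
      ((hasDerivAt_hsymTwo_ray 3 b c s).const_mul (A3 / 4))).add
      ((hasDerivAt_hsymTwo_ray 2 b c s).const_mul (A2 / 3))
    have := le_of_deriv_le_aux _ _ (fun s => M * s) (fun _ => M) hD
      (fun s => by simpa using (hasDerivAt_id s).const_mul M) ?_ (by simp) (by simp)
    · simpa using this
    · intro s h0 h1
      refine le_trans (le_of_eq ?_) (h _ (norm_segment_le hb hc h0 h1))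
      congr 1
      push_cast
      ring
  have hD := fun s : ℂ => ((((hasDerivAt_hsymThree_dilate 6 b c d s).const_mul (A6 / 28)).add
      ((hasDerivAt_hsymThree_dilate 5 b c d s).const_mul (A5 / 21))).add
      ((hasDerivAt_hsymThree_dilate 3 b c d s).const_mul (A3 / 10))).add
      ((hasDerivAt_hsymThree_dilate 2 b c d s).const_mul (A2 / 6))
  have := le_of_deriv_le_aux _ _ (fun s => M * s ^ 2) (fun s => M * (2 * s)) hD
      (fun s => by simpa using (hasDerivAt_pow 2 s).const_mul M) ?_ (by simp) (by simp)
  · simp only [Pi.add_apply, one_pow, one_mul, add_sub_cancel, mul_one] at this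
    refine le_trans (le_of_eq ?_) this
    congr 1
    ring
  · intro s h0 h1
    have := inner _ _ (norm_segment_le hb hd h0 h1) (norm_segment_le hc hd h0 h1)
    have h3 := mul_le_mul_of_nonneg_left this (show 0 ≤ 2 * s by linarith)
    rw [← Complex.re_ofReal_mul] at h3
    refine le_trans (le_of_eq ?_) (h3.trans (by linarith))
    congr 1
    push_cast
    ring

lemma base_point (lam t : ℝ) (h0 : 0 < lam) (h1 : lam ≤ 8 / 13) (Y X : ℂ)
    (hY : ‖Y‖ ≤ 1) (hX : ‖X‖ ≤ 1) :
    (4 * Y ^ 2 - 3 * X * Y - I * lam * t * (5 * Y - 3 * X)).re ≤ 7 + lam * t ^ 2 := by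
  have hY2 : Y.re ^ 2 + Y.im ^ 2 ≤ 1 := by
    have := Complex.sq_norm Y
    rw [Complex.normSq_apply] at this
    nlinarith [norm_nonneg Y]
  have hX2 : X.re ^ 2 + X.im ^ 2 ≤ 1 := by
    have := Complex.sq_norm X
    rw [Complex.normSq_apply] at this
    nlinarith [norm_nonneg X]
  have e : (4 * Y ^ 2 - 3 * X * Y - I * lam * t * (5 * Y - 3 * X)).re =
      4 * (Y.re ^ 2 - Y.im ^ 2) - 3 * (X.re * Y.re - X.im * Y.im)
        + lam * t * (5 * Y.im - 3 * X.im) := by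
    simp [pow_two]
    ring
  rw [e]
  have k1 : lam * t * (5 * Y.im - 3 * X.im) ≤ lam * t ^ 2 + lam / 4 * (5 * Y.im - 3 * X.im) ^ 2 := by
    nlinarith [mul_nonneg h0.le (sq_nonneg (t - (5 * Y.im - 3 * X.im) / 2))]
  have k2 : lam / 4 * (5 * Y.im - 3 * X.im) ^ 2 ≤ 2 / 13 * (5 * Y.im - 3 * X.im) ^ 2 := by
    nlinarith [sq_nonneg (5 * Y.im - 3 * X.im)]
  have k3 : 2 / 13 * (5 * Y.im - 3 * X.im) ^ 2 ≤
      8 * Y.im ^ 2 + 3 / 2 * (Y.im - X.im) ^ 2 := by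
    nlinarith [sq_nonneg (8 * Y.im - (Y.im - X.im) / 2), sq_nonneg (4 * Y.im - (Y.im - X.im)), sq_nonneg (8 * Y.im - (Y.im - X.im))]
  nlinarith [sq_nonneg (Y.re + X.re)]

/-- The kernel inequality. -/
lemma kernel_ineq (lam t : ℝ) (h0 : 0 < lam) (h1 : lam ≤ 8 / 13) (om x b c d : ℂ)
    (hom : ‖om‖ = 1) (hx : ‖x‖ ≤ 1) (hb : ‖b‖ ≤ 1) (hc : ‖c‖ ≤ 1) (hd : ‖d‖ ≤ 1) :
    (om ^ 2 / 7 * (hsymThree 6 b c d - x * hsymThree 5 b c d)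
      - I * lam * t * om / 2 * (hsymThree 3 b c d - x * hsymThree 2 b c d)).re
      ≤ 7 + lam * t ^ 2 := by
  have := simplex_avg (4 * om ^ 2) (-3 * om ^ 2 * x) (-I * lam * t * om * 5)
    (I * lam * t * om * 3 * x) (7 + lam * t ^ 2) ?_ b c d hb hc hd
  · refine le_trans (le_of_eq ?_) this
    congr 1
    ring
  · intro z hz
    have := base_point lam t h0 h1 (om * z ^ 3) (om * x * z ^ 2) ?_ ?_
    · refine le_trans (le_of_eq ?_) this
      congr 1
      ring
    · rw [norm_mul, norm_pow, hom, one_mul]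
      exact pow_le_one₀ (norm_nonneg _) hz
    · rw [norm_mul, norm_mul, norm_pow, hom, one_mul]
      exact mul_le_one₀ hx (by positivity) (pow_le_one₀ (norm_nonneg _) hz)

lemma jack_aux (W : ℂ → ℂ) (hW : DifferentiableOn ℂ W (ball 0 1)) (hW0 : W 0 = 0)
    (hne : ∀ z ∈ ball (0 : ℂ) 1, W z ≠ 1)
    (hre : ∀ z ∈ ball (0 : ℂ) 1, -(1 / 2 : ℝ) < (z * deriv W z / (1 - W z)).re) :
    ∀ z ∈ ball (0 : ℂ) 1, ‖W z‖ < 1 := by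
  intro z1 hz1
  by_contra hcon
  push Not at hcon
  have hz1' : ‖z1‖ < 1 := by simpa using hz1
  have hsub : closedBall (0 : ℂ) ‖z1‖ ⊆ ball 0 1 := closedBall_subset_ball hz1'
  have hcomp : IsCompact (closedBall (0 : ℂ) ‖z1‖ ∩ (fun z => ‖W z‖) ⁻¹' Set.Ici 1) := by
    apply (isCompact_closedBall (0 : ℂ) ‖z1‖).of_isClosed_subset _ Set.inter_subset_left
    exact (hW.continuousOn.mono hsub).norm.preimage_isClosed_of_isClosed isClosed_closedBall
      isClosed_Ici
  obtain ⟨z0, ⟨hz0a, hz0b⟩, hz0min⟩ := hcomp.exists_isMinOn ⟨z1, by simp, hcon⟩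
    continuous_norm.continuousOn
  have hz0 : z0 ∈ ball (0 : ℂ) 1 := hsub hz0a
  have hz0b' : 1 ≤ ‖W z0‖ := hz0b
  have hz0ne : z0 ≠ 0 := by
    rintro rfl
    rw [hW0] at hz0b'
    simp at hz0b'
    linarith
  have hr : 0 < ‖z0‖ := norm_pos_iff.mpr hz0ne
  have hz0lt : ‖z0‖ < 1 := by simpa using hz0
  have hsub0 : ball (0 : ℂ) ‖z0‖ ⊆ ball 0 1 := ball_subset_ball hz0lt.le
  have hlt : ∀ z ∈ ball (0 : ℂ) ‖z0‖, ‖W z‖ ≤ 1 := by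
    intro z hz
    by_contra hc
    push Not at hc
    have hz' : ‖z‖ < ‖z0‖ := by simpa using hz
    have h1 : ‖z0‖ ≤ ‖z‖ := hz0min (⟨by
      have : ‖z0‖ ≤ ‖z1‖ := by simpa using hz0a
      simpa using (hz'.le.trans this), hc.le⟩)
    linarith
  have hschw : ∀ z ∈ ball (0 : ℂ) ‖z0‖, ‖W z‖ ≤ ‖z‖ / ‖z0‖ := by
    intro z hz
    have := Complex.dist_le_div_mul_dist_of_mapsTo_ball (f := W) (c := 0) (R₁ := ‖z0‖) (R₂ := 1)
      (hW.mono hsub0) (fun w hw => by simpa [hW0] using hlt w hw) hz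
    simpa [hW0, div_eq_inv_mul] using this
  have hWz0 : W z0 ≠ 0 := by
    intro h
    rw [h] at hz0b'
    simp at hz0b'
    linarith
  set k := z0 * deriv W z0 / W z0 with hk
  have hWd : HasDerivAt W (deriv W z0) z0 :=
    (hW.differentiableAt (isOpen_ball.mem_nhds hz0)).hasDerivAt
  -- directional inequality
  have hdir : ∀ v : ℂ, v.re < 0 → ((k - 1) * v).re ≤ 0 := by
    intro v hv
    have hD : HasDerivAt (fun s : ℂ => W (z0 * exp (s * v)) * exp (-(s * v)) / W z0)
        ((k - 1) * v) 0 := by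
      have e1 : HasDerivAt (fun s : ℂ => s * v) v 0 := by
        simpa using (hasDerivAt_id (0 : ℂ)).mul_const v
      have e2 : HasDerivAt (fun s : ℂ => z0 * exp (s * v)) (z0 * v) 0 := by
        simpa using (e1.cexp).const_mul z0
      have e3 : HasDerivAt (fun s : ℂ => exp (-(s * v))) (-v) 0 := by
        simpa using e1.neg.cexp
      have e4 : HasDerivAt (fun s : ℂ => W (z0 * exp (s * v))) (deriv W z0 * (z0 * v)) 0 := by
        apply HasDerivAt.comp (0 : ℂ) (h₂ := W) _ e2
        simpa using hWd
      refine ((e4.mul e3).div_const (W z0)).congr_deriv ?_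
      simp
      rw [hk]
      field_simp
      ring
    have hD' := HasDerivAt.real_of_complex (z := (0 : ℝ)) (by simpa using hD)
    have htend := hD'.hasDerivWithinAt (s := Set.Ioi 0)
    rw [hasDerivWithinAt_iff_tendsto_slope' (by simp)] at htend
    refine le_of_tendsto htend ?_
    filter_upwards [self_mem_nhdsWithin] with s hs
    have hs : 0 < s := hs
    rw [slope_def_field]
    apply div_nonpos_of_nonpos_of_nonneg _ (by linarith)
    have hval : ‖W (z0 * exp (s * v)) * exp (-(s * v)) / W z0‖ ≤ 1 := by
      have hre1 : (s * v : ℂ).re = s * v.re := by simp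
      have hlt1 : Real.exp (s * v.re) < 1 := by
        rw [Real.exp_lt_one_iff]
        nlinarith
      have hn : ‖z0 * exp (s * v)‖ = ‖z0‖ * Real.exp (s * v.re) := by
        rw [norm_mul, Complex.norm_exp, hre1]
      have := hschw (z0 * exp (s * v)) (by
        rw [mem_ball_zero_iff, hn]
        nlinarith)
      rw [hn, mul_div_cancel_left₀ _ hr.ne'] at this
      rw [norm_div, norm_mul, Complex.norm_exp, neg_re, hre1, div_le_one (by linarith)]
      refine le_trans ?_ hz0b'
      calc _ ≤ Real.exp (s * v.re) * Real.exp (-(s * v.re)) := by gcongr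
        _ = 1 := by rw [← Real.exp_add]; simp
    have h1 := (Complex.re_le_norm _).trans hval
    simp [hWz0]
    simpa using h1
  have hkre : ∀ n : ℝ, -(k.re - 1) - n * k.im ≤ 0 := by
    intro n
    have := hdir (-1 + n * I) (by simp)
    simp at this
    linarith
  have hkim : k.im = 0 := by
    by_contra hne'
    have := hkre ((-(k.re - 1) - 1) / k.im)
    rw [div_mul_cancel₀ _ hne'] at this
    linarith
  have hk1 : 1 ≤ k.re := by linarith [hkre 0]
  have hkk : k = (k.re : ℂ) := by
    apply Complex.ext <;> simp [hkim]
  have hfin := hre z0 hz0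
  have h1W : 1 - W z0 ≠ 0 := sub_ne_zero.mpr (hne z0 hz0).symm
  have e5 : z0 * deriv W z0 / (1 - W z0) = (k.re : ℂ) * (1 / (1 - W z0) - 1) := by
    rw [← hkk, hk]
    field_simp
    ring
  rw [e5, Complex.re_ofReal_mul] at hfin
  have h6 : (1 / (1 - W z0) - 1).re ≤ -(1 / 2) := by
    have hpos : 0 < normSq (1 - W z0) := normSq_pos.mpr h1W
    have hsq : 1 ≤ (W z0).re * (W z0).re + (W z0).im * (W z0).im := by
      have := Complex.sq_norm (W z0)
      rw [normSq_apply] at this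
      nlinarith
    have : (1 / (1 - W z0)).re ≤ 1 / 2 := by
      rw [one_div, Complex.inv_re, div_le_iff₀ hpos, normSq_apply]
      simp
      nlinarith
    simp at this ⊢
    linarith
  nlinarith

lemma starlike_sqrt (g : ℂ → ℂ) (hg : IsStarlikeFn g) :
    ∃ q : ℂ → ℂ, DifferentiableOn ℂ q (ball 0 1) ∧ q 0 = 1 ∧
      (∀ z ∈ ball (0 : ℂ) 1, z * q z ^ 2 = g z) ∧
      (∀ z ∈ ball (0 : ℂ) 1, q z ≠ 0) ∧
      ∀ z ∈ ball (0 : ℂ) 1, 1 / 2 < (q z).re := by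
  obtain ⟨hgd, hg0, hg1, hgre⟩ := hg
  have hopen : IsOpen (ball (0 : ℂ) 1) := isOpen_ball
  have h0mem : (0 : ℂ) ∈ ball (0 : ℂ) 1 := by simp
  set u := dslope g 0 with hu
  have hud : DifferentiableOn ℂ u (ball 0 1) :=
    (Complex.differentiableOn_dslope (hopen.mem_nhds h0mem)).mpr hgd
  have hu0 : u 0 = 1 := by simp [hu, hg1]
  have hug : ∀ z, z * u z = g z := by
    intro z
    have := sub_smul_dslope g 0 z
    simpa [hg0] using this
  have hune : ∀ z ∈ ball (0 : ℂ) 1, u z ≠ 0 := by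
    intro z hz h
    rcases eq_or_ne z 0 with rfl | hz0
    · rw [hu0] at h; exact one_ne_zero h
    · have := hgre z ⟨hz, hz0⟩
      rw [← hug z, h] at this
      simp at this
  have hdiff : DifferentiableOn ℂ (fun z => deriv u z / u z) (ball 0 1) :=
    (hud.deriv hopen).div hud hune
  obtain ⟨H, hH0, hH⟩ := hdiff.isExactOn_ball.with_val_at 0 0
  have hexp : ∀ z ∈ ball (0 : ℂ) 1, u z * exp (-H z) = 1 := by
    intro z hz
    have hder : ∀ w ∈ ball (0 : ℂ) 1, HasDerivAt (fun z => u z * exp (-H z)) 0 w := by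
      intro w hw
      have h1 := (hud.differentiableAt (hopen.mem_nhds hw)).hasDerivAt
      refine (h1.mul (hH w hw).neg.cexp).congr_deriv ?_
      have := hune w hw
      field_simp
      ring
    have := (convex_ball (0 : ℂ) 1).is_const_of_fderivWithin_eq_zero (𝕜 := ℂ)
      (f := fun z => u z * exp (-H z))
      (fun w hw => (hder w hw).differentiableAt.differentiableWithinAt)
      (fun w hw => by
        rw [fderivWithin_of_isOpen hopen hw]
        ext
        simp [(hder w hw).deriv]) hz h0mem
    simpa [hH0, hu0] using this
  have hHd : DifferentiableOn ℂ H (ball 0 1) :=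
    fun z hz => (hH z hz).differentiableAt.differentiableWithinAt
  set V : ℂ → ℂ := fun z => exp (-(H z) / 2) with hV
  have hVd : ∀ z ∈ ball (0 : ℂ) 1, HasDerivAt V (-(V z) * (deriv u z / u z) / 2) z := by
    intro z hz
    refine ((hH z hz).neg.div_const 2).cexp.congr_deriv ?_
    simp only [hV, Pi.neg_apply]; ring
  have hW : ∀ z ∈ ball (0 : ℂ) 1, ‖1 - V z‖ < 1 := by
    apply jack_aux (fun z => 1 - V z)
    · exact fun z hz => ((hVd z hz).const_sub 1).differentiableAt.differentiableWithinAt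
    · simp [hV, hH0]
    · intro z hz h
      have : V z = 0 := by linear_combination -h
      exact exp_ne_zero _ this
    · intro z hz
      rw [((hVd z hz).const_sub 1).deriv]
      have hVne : V z ≠ 0 := exp_ne_zero _
      have e : z * -(-V z * (deriv u z / u z) / 2) / (1 - (1 - V z))
          = z * deriv u z / u z / 2 := by
        have := hune z hz
        simp only [sub_sub_cancel]
        field_simp
      rw [e]
      rcases eq_or_ne z 0 with rfl | hz0
      · simp
      · have h1 := hgre z ⟨hz, hz0⟩
        have hgder : deriv g z = u z + z * deriv u z := by
          have hd := (hasDerivAt_id z).mul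
            (hud.differentiableAt (hopen.mem_nhds hz)).hasDerivAt
          have : g = id * u := by
            funext w
            simp [hug w]
          rw [this, hd.deriv]
          simp
        have e2 : z * deriv g z / g z = 1 + z * deriv u z / u z := by
          have := hune z hz
          rw [hgder, ← hug z]
          field_simp
        rw [e2] at h1
        have e3 : z * deriv u z / u z / 2 = ((1 / 2 : ℝ) : ℂ) * (z * deriv u z / u z) := by
          push_cast; ring
        rw [e3, re_ofReal_mul]
        rw [add_re, one_re] at h1
        linarith
  refine ⟨fun z => exp (H z / 2), ?_, by simp [hH0], ?_, fun z _ => exp_ne_zero _, ?_⟩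
  · exact (hHd.div_const 2).cexp
  · intro z hz
    have h1 := hexp z hz
    rw [exp_neg] at h1
    have h2 : u z = exp (H z) := by
      have := exp_ne_zero (H z)
      field_simp at h1
      exact h1
    rw [← hug z, h2, ← Complex.exp_nat_mul]
    congr 2
    push_cast; ring
  · intro z hz
    have h1 := hW z hz
    have h2 : V z * exp (H z / 2) = 1 := by
      simp only [hV]
      rw [← exp_add, show -H z / 2 + H z / 2 = 0 by ring, exp_zero]
    set q := exp (H z / 2)
    have hq : 0 < ‖q‖ := norm_pos_iff.mpr (exp_ne_zero _)
    have h3 : ‖q - 1‖ < ‖q‖ := by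
      have : q - 1 = (1 - V z) * q := by linear_combination h2
      rw [this, norm_mul]
      nlinarith
    have h4 : ‖q - 1‖ ^ 2 < ‖q‖ ^ 2 := by
      have := norm_nonneg (q - 1)
      nlinarith
    rw [Complex.sq_norm, Complex.sq_norm, normSq_apply, normSq_apply] at h4
    simp at h4
    show 1 / 2 < q.re
    nlinarith

lemma coeff_avg (h : ℂ → ℂ) (hh : DifferentiableOn ℂ h (ball 0 1)) (r : ℝ) (h0 : 0 < r)
    (h1 : r < 1) (k : ℕ) :
    Real.circleAverage (fun z => (z⁻¹) ^ k * h z) 0 r = taylorCoeff h k := by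
  rw [Real.circleAverage_eq_circleIntegral h0.ne']
  have h2 := DifferentiableOn.circleIntegral_one_div_sub_center_pow_smul (c := 0) h0 k
    (hh.mono (closedBall_subset_ball h1))
  have e : (fun z : ℂ => (z - 0)⁻¹ • ((z⁻¹) ^ k * h z))
      = fun z : ℂ => (1 / (z - 0) ^ (k + 1)) • h z := by
    funext z
    simp only [sub_zero, smul_eq_mul, one_div, pow_succ, mul_inv, inv_pow]
    ring
  rw [e, h2, taylorCoeff, smul_eq_mul, smul_eq_mul]
  have : (2 * Real.pi * I : ℂ) ≠ 0 := by simp [Real.pi_ne_zero]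
  field_simp

lemma herglotz_functional (h : ℂ → ℂ) (hh : DifferentiableOn ℂ h (ball 0 1)) (hh0 : h 0 = 1)
    (hre : ∀ z ∈ ball (0 : ℂ) 1, 1 / 2 < (h z).re) (n : ℕ) (L : ℕ → ℂ) (M : ℝ)
    (hL : ∀ c : ℂ, ‖c‖ = 1 → (∑ k ∈ Finset.range n, L k * c ^ k).re ≤ M) :
    (∑ k ∈ Finset.range n, L k * taylorCoeff h k).re ≤ M := by
  have key : ∀ r : ℝ, 0 < r → r < 1 →
      (∑ k ∈ Finset.range n, L k * (r : ℂ) ^ k * taylorCoeff h k).re ≤ M := by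
    intro r hr0 hr1
    have hrc : (r : ℂ) ≠ 0 := by exact_mod_cast hr0.ne'
    have hsub : closedBall (0 : ℂ) r ⊆ ball 0 1 := closedBall_subset_ball hr1
    have hsph : sphere (0 : ℂ) r ⊆ ball 0 1 := sphere_subset_closedBall.trans hsub
    set S : ℂ → ℂ := fun z => ∑ k ∈ Finset.range n, (starRingEnd ℂ (L k)) * (z / r) ^ k with hS
    set A : ℂ → ℂ := fun z => M * (2 * h z - 1) - (h z - 1) * S z with hA
    set B : ℂ → ℂ := fun z => ∑ k ∈ Finset.range n, (L k * (r : ℂ) ^ k) • ((z⁻¹) ^ k * h z) with hB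
    have hSd : Differentiable ℂ S := by
      simp only [hS]
      fun_prop
    have hAd : DifferentiableOn ℂ A (ball 0 1) :=
      ((hh.const_mul 2).sub_const 1).const_mul (M : ℂ) |>.sub
        ((hh.sub_const 1).mul hSd.differentiableOn)
    have hAavg : Real.circleAverage A 0 r = M := by
      have hcl : DiffContOnCl ℂ A (ball 0 |r|) := by
        rw [abs_of_pos hr0]
        exact (hAd.mono (closure_ball_subset_closedBall.trans hsub)).diffContOnCl
      rw [hcl.circleAverage]
      simp [hA, hh0]
      ring
    have hhc : ContinuousOn h (sphere 0 r) := hh.continuousOn.mono hsph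
    have hterm : ∀ k ∈ Finset.range n,
        CircleIntegrable (fun z : ℂ => (L k * (r : ℂ) ^ k) • ((z⁻¹) ^ k * h z)) 0 r := by
      intro k _
      apply ContinuousOn.circleIntegrable hr0.le
      refine continuousOn_const.mul (ContinuousOn.mul (ContinuousOn.pow ?_ k) hhc)
      apply continuousOn_id.inv₀
      intro z hz
      exact ne_of_mem_sphere hz hr0.ne'
    have hBavg : Real.circleAverage B 0 r
        = ∑ k ∈ Finset.range n, L k * (r : ℂ) ^ k * taylorCoeff h k := by
      rw [hB, Real.circleAverage_fun_sum hterm]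
      refine Finset.sum_congr rfl fun k _ => ?_
      rw [Real.circleAverage_fun_smul, coeff_avg h hh r hr0 hr1, smul_eq_mul]
    have hAi : CircleIntegrable A 0 r :=
      (hAd.continuousOn.mono hsph).circleIntegrable hr0.le
    have hBi : CircleIntegrable B 0 r := by
      apply ContinuousOn.circleIntegrable hr0.le
      simp only [hB]
      apply continuousOn_finsetSum
      intro k _
      refine continuousOn_const.mul (ContinuousOn.mul (ContinuousOn.pow ?_ k) hhc)
      apply continuousOn_id.inv₀
      intro z hz
      exact ne_of_mem_sphere hz hr0.ne'
    have havg := Real.circleAverage_fun_sub hAi hBi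
    have hABi : CircleIntegrable (fun z => A z - B z) 0 r := hAi.sub hBi
    have hcomm := Complex.reCLM.circleAverage_comp_comm hABi
    have hnonneg : 0 ≤ Real.circleAverage (Complex.reCLM ∘ fun z => A z - B z) 0 r := by
      apply Real.circleAverage_nonneg_of_nonneg
      intro z hz
      rw [abs_of_pos hr0] at hz
      have hzn : ‖z‖ = r := by simpa using hz
      have hz0 : z ≠ 0 := ne_of_mem_sphere hz hr0.ne'
      have hc : ‖(r : ℂ) / z‖ = 1 := by
        rw [norm_div, hzn, Complex.norm_of_nonneg hr0.le, div_self hr0.ne']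
      set T := ∑ k ∈ Finset.range n, L k * ((r : ℂ) / z) ^ k with hT
      have hTM := hL _ hc
      have hBT : B z = h z * T := by
        simp only [hB, hT, Finset.mul_sum, smul_eq_mul]
        refine Finset.sum_congr rfl fun k _ => ?_
        rw [div_pow, inv_pow]
        ring
      have hST : S z = starRingEnd ℂ T := by
        simp only [hS, hT, map_sum, map_mul, map_pow, map_div₀, conj_ofReal]
        refine Finset.sum_congr rfl fun k _ => ?_
        congr 2
        have hzz : z * starRingEnd ℂ z = (r : ℂ) ^ 2 := by
          rw [Complex.mul_conj, ← Complex.sq_norm, hzn]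
          push_cast; rfl
        have hz0' : starRingEnd ℂ z ≠ 0 := by simpa using hz0
        field_simp
        linear_combination hzz
      have hre' := hre z (hsph hz)
      have e : (Complex.reCLM (A z - B z)) = (2 * (h z).re - 1) * (M - T.re) := by
        rw [hBT]
        simp only [hA, hST, Complex.reCLM_apply]
        simp
        ring
      show 0 ≤ Complex.reCLM (A z - B z)
      rw [e]
      apply mul_nonneg <;> linarith
    rw [hcomm, havg, hAavg, hBavg] at hnonneg
    simp only [Complex.reCLM_apply, sub_re, ofReal_re] at hnonneg
    linarith
  have hcont : Continuous fun r : ℝ =>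
      (∑ k ∈ Finset.range n, L k * (r : ℂ) ^ k * taylorCoeff h k).re := by fun_prop
  have htend := (hcont.tendsto 1).mono_left (nhdsWithin_le_nhds (s := Set.Iio 1))
  have hfin := le_of_tendsto htend (b := M) (by
    filter_upwards [Ioo_mem_nhdsLT (show (0 : ℝ) < 1 by norm_num)] with r hr
    exact key r hr.1 hr.2)
  simpa using hfin

lemma sum_reverse_three (s : Finset ℕ) (F : ℕ → ℕ → ℕ → ℂ) :
    ∑ j ∈ s, ∑ k ∈ s, ∑ i ∈ s, F i j k = ∑ i ∈ s, ∑ k ∈ s, ∑ j ∈ s, F i j k := by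
  calc ∑ j ∈ s, ∑ k ∈ s, ∑ i ∈ s, F i j k = ∑ j ∈ s, ∑ i ∈ s, ∑ k ∈ s, F i j k :=
        Finset.sum_congr rfl fun j _ => Finset.sum_comm
    _ = ∑ i ∈ s, ∑ j ∈ s, ∑ k ∈ s, F i j k := Finset.sum_comm
    _ = _ := Finset.sum_congr rfl fun i _ => Finset.sum_comm

/-- Trilinear form of the Herglotz functional lemma. -/
lemma herglotz_trilinear (q P : ℂ → ℂ) (hq : DifferentiableOn ℂ q (ball 0 1)) (hq0 : q 0 = 1)
    (hqre : ∀ z ∈ ball (0 : ℂ) 1, 1 / 2 < (q z).re)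
    (hP : DifferentiableOn ℂ P (ball 0 1)) (hP0 : P 0 = 1)
    (hPre : ∀ z ∈ ball (0 : ℂ) 1, 1 / 2 < (P z).re) (n : ℕ) (w : ℕ → ℕ → ℕ → ℂ) (M : ℝ)
    (hw : ∀ b c d : ℂ, ‖b‖ = 1 → ‖c‖ = 1 → ‖d‖ = 1 →
      (∑ k ∈ Finset.range n, ∑ i ∈ Finset.range n, ∑ j ∈ Finset.range n,
        w i j k * c ^ i * d ^ j * b ^ k).re ≤ M) :
    (∑ k ∈ Finset.range n, ∑ i ∈ Finset.range n, ∑ j ∈ Finset.range n,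
        w i j k * taylorCoeff q i * taylorCoeff q j * taylorCoeff P k).re ≤ M := by
  have s1 : ∀ c d : ℂ, ‖c‖ = 1 → ‖d‖ = 1 →
      (∑ k ∈ Finset.range n, ∑ i ∈ Finset.range n, ∑ j ∈ Finset.range n,
        w i j k * c ^ i * d ^ j * taylorCoeff P k).re ≤ M := by
    intro c d hc hd
    have := herglotz_functional P hP hP0 hPre n
      (fun k => ∑ i ∈ Finset.range n, ∑ j ∈ Finset.range n, w i j k * c ^ i * d ^ j) M
      (fun b hb => by simpa only [Finset.sum_mul] using hw b c d hb hc hd)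
    simpa only [Finset.sum_mul] using this
  have s2 : ∀ d : ℂ, ‖d‖ = 1 →
      (∑ i ∈ Finset.range n, ∑ k ∈ Finset.range n, ∑ j ∈ Finset.range n,
        w i j k * d ^ j * taylorCoeff P k * taylorCoeff q i).re ≤ M := by
    intro d hd
    have := herglotz_functional q hq hq0 hqre n
      (fun i => ∑ k ∈ Finset.range n, ∑ j ∈ Finset.range n, w i j k * d ^ j * taylorCoeff P k) M
      (fun c hc => by
        refine le_trans (le_of_eq ?_) (s1 c d hc hd)
        congr 1
        simp only [Finset.sum_mul]
        rw [Finset.sum_comm]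
        refine Finset.sum_congr rfl fun k _ => Finset.sum_congr rfl fun i _ =>
          Finset.sum_congr rfl fun j _ => ?_
        ring)
    simpa only [Finset.sum_mul] using this
  have := herglotz_functional q hq hq0 hqre n
      (fun j => ∑ k ∈ Finset.range n, ∑ i ∈ Finset.range n,
        w i j k * taylorCoeff q i * taylorCoeff P k) M
      (fun d hd => by
        refine le_trans (le_of_eq ?_) (s2 d hd)
        congr 1
        simp only [Finset.sum_mul]
        rw [sum_reverse_three]
        refine Finset.sum_congr rfl fun i _ => Finset.sum_congr rfl fun k _ =>
          Finset.sum_congr rfl fun j _ => ?_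
        ring)
  refine le_trans (le_of_eq ?_) this
  congr 1
  simp only [Finset.sum_mul]
  rw [Finset.sum_comm (s := Finset.range n) (t := Finset.range n)
    (f := fun j k => ∑ i ∈ Finset.range n,
      w i j k * taylorCoeff q i * taylorCoeff P k * taylorCoeff q j)]
  refine Finset.sum_congr rfl fun k _ => ?_
  rw [Finset.sum_comm]
  refine Finset.sum_congr rfl fun j _ => Finset.sum_congr rfl fun i _ => ?_
  ring

lemma taylorCoeff_mul (u v : ℂ → ℂ) (hu : DifferentiableOn ℂ u (ball 0 1))
    (hv : DifferentiableOn ℂ v (ball 0 1)) (n : ℕ) :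
    taylorCoeff (u * v) n = ∑ i ∈ Finset.range (n + 1), taylorCoeff u i * taylorCoeff v (n - i) := by
  have h0 : ball (0 : ℂ) 1 ∈ nhds (0 : ℂ) := isOpen_ball.mem_nhds (by simp)
  have cu : ContDiffAt ℂ n u 0 := (hu.analyticAt h0).contDiffAt
  have cv : ContDiffAt ℂ n v 0 := (hv.analyticAt h0).contDiffAt
  simp only [taylorCoeff]
  rw [iteratedDeriv_mul cu cv, Finset.sum_div]
  refine Finset.sum_congr rfl fun i hi => ?_
  have hi' : i ≤ n := by simpa [Nat.lt_succ_iff] using hi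
  rw [Nat.cast_choose ℂ hi']
  have a1 : (n.factorial : ℂ) ≠ 0 := by exact_mod_cast n.factorial_ne_zero
  have a2 : (i.factorial : ℂ) ≠ 0 := by exact_mod_cast i.factorial_ne_zero
  have a3 : ((n - i).factorial : ℂ) ≠ 0 := by exact_mod_cast (n - i).factorial_ne_zero
  field_simp

lemma taylorCoeff_congr (u v : ℂ → ℂ) (h : ∀ z ∈ ball (0 : ℂ) 1, u z = v z) (n : ℕ) :
    taylorCoeff u n = taylorCoeff v n := by
  have : u =ᶠ[nhds 0] v := by
    filter_upwards [isOpen_ball.mem_nhds (show (0 : ℂ) ∈ ball (0 : ℂ) 1 by simp)] with z hz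
    exact h z hz
  simp only [taylorCoeff, this.iteratedDeriv_eq n]

lemma taylorCoeff_succ_deriv (f : ℂ → ℂ) (n : ℕ) :
    taylorCoeff f (n + 1) = taylorCoeff (deriv f) n / (n + 1) := by
  simp only [taylorCoeff, iteratedDeriv_succ', Nat.factorial_succ]
  push_cast
  have a1 : (n.factorial : ℂ) ≠ 0 := by exact_mod_cast n.factorial_ne_zero
  have a2 : (n + 1 : ℂ) ≠ 0 := by exact_mod_cast n.succ_ne_zero
  field_simp

lemma taylorCoeff_affine (P : ℂ → ℂ) (ka : ℂ) (n : ℕ) (hn : 0 < n) :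
    taylorCoeff (fun z => (1 - ka) + ka * P z) n = ka * taylorCoeff P n := by
  simp only [taylorCoeff]
  rw [iteratedDeriv_const_add hn, iteratedDeriv_const_mul_field]
  ring

lemma cos_pos_of_re_pos (p : ℂ → ℂ) (hp : DifferentiableOn ℂ p (ball 0 1))
    (hre : ∀ z ∈ ball (0 : ℂ) 1 \ {0}, 0 < (p z).re) : 0 < (p 0).re := by
  have hr : (0 : ℝ) < 1 / 2 := by norm_num
  have hsub : closedBall (0 : ℂ) (1 / 2) ⊆ ball 0 1 := closedBall_subset_ball (by norm_num)
  have hsph := sphere_subset_closedBall.trans hsub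
  have hcl : DiffContOnCl ℂ p (ball 0 |(1 / 2 : ℝ)|) := by
    rw [abs_of_pos hr]
    exact (hp.mono (closure_ball_subset_closedBall.trans hsub)).diffContOnCl
  have hci : CircleIntegrable p 0 (1 / 2) := (hp.continuousOn.mono hsph).circleIntegrable hr.le
  have hcomm := Complex.reCLM.circleAverage_comp_comm hci
  rw [hcl.circleAverage] at hcomm
  have hcont : ContinuousOn (fun z => (p z).re) (sphere (0 : ℂ) (1 / 2)) :=
    Complex.continuous_re.comp_continuousOn (hp.continuousOn.mono hsph)
  obtain ⟨z0, hz0, hmin⟩ := (isCompact_sphere (0 : ℂ) (1 / 2)).exists_isMinOn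
    (NormedSpace.sphere_nonempty.mpr hr.le) hcont
  have hpos : 0 < (p z0).re := hre z0 ⟨hsph hz0, ne_of_mem_sphere hz0 hr.ne'⟩
  have hle := Real.circleAverage_mono (c := 0) (R := 1 / 2) (f₁ := fun _ => (p z0).re)
    (f₂ := Complex.reCLM ∘ p) (circleIntegrable_const _ _ _)
    (hcont.circleIntegrable hr.le) (fun x hx => hmin (by simpa [abs_of_pos hr] using hx))
  rw [Real.circleAverage_const, hcomm] at hle
  exact hpos.trans_le hle

/-- The weights of the trilinear functional. -/
noncomputable def zalcWeight (A B ka : ℂ) (i j k : ℕ) : ℂ :=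
  (if i + j + k = 6 then A else if i + j + k = 3 then B else 0) * (if k = 0 then 1 else ka)

/-- Explicit Cauchy product coefficient. -/
noncomputable def tripleCoeff (s t u : ℕ → ℂ) (n : ℕ) : ℂ :=
  ∑ i ∈ Finset.range (n + 1), s i * ∑ j ∈ Finset.range (n - i + 1), t j * u (n - i - j)

set_option maxHeartbeats 4000000 in
lemma zalcWeight_sum (A B ka : ℂ) (s t u : ℕ → ℂ) :
    ∑ k ∈ Finset.range 7, ∑ i ∈ Finset.range 7, ∑ j ∈ Finset.range 7,
      zalcWeight A B ka i j k * s i * t j * u k =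
    A * tripleCoeff s t (fun k => if k = 0 then u 0 else ka * u k) 6
      + B * tripleCoeff s t (fun k => if k = 0 then u 0 else ka * u k) 3 := by
  simp [Finset.sum_range_succ, zalcWeight, tripleCoeff]
  ring

lemma tripleCoeff_kernel_six (e b c d : ℂ) :
    tripleCoeff (fun i => c ^ i) (fun i => d ^ i)
      (fun k => if k = 0 then b ^ 0 else (1 + e) * b ^ k) 6
      = hsymThree 6 b c d - (-e * b) * hsymThree 5 b c d := by
  simp [Finset.sum_range_succ, tripleCoeff, hsymThree, hsymTwo]
  ring

lemma tripleCoeff_kernel_three (e b c d : ℂ) :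
    tripleCoeff (fun i => c ^ i) (fun i => d ^ i)
      (fun k => if k = 0 then b ^ 0 else (1 + e) * b ^ k) 3
      = hsymThree 3 b c d - (-e * b) * hsymThree 2 b c d := by
  simp [Finset.sum_range_succ, tripleCoeff, hsymThree, hsymTwo]
  ring

/-- Structure of the derivative of a close-to-convex function. -/
lemma closeToConvex_structure (f : ℂ → ℂ) (hf : IsCloseToConvex f) :
    ∃ (q P : ℂ → ℂ) (e : ℂ), ‖e‖ = 1 ∧
      DifferentiableOn ℂ q (ball 0 1) ∧ q 0 = 1 ∧ (∀ z ∈ ball (0 : ℂ) 1, 1 / 2 < (q z).re) ∧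
      DifferentiableOn ℂ P (ball 0 1) ∧ P 0 = 1 ∧ (∀ z ∈ ball (0 : ℂ) 1, 1 / 2 < (P z).re) ∧
      ∀ z ∈ ball (0 : ℂ) 1, deriv f z = q z * (q z * ((1 - (1 + e)) + (1 + e) * P z)) := by
  obtain ⟨hfd, -, hf1, th, g, hg, hre⟩ := hf
  obtain ⟨q, hqd, hq0, hqg, hqne, hqre⟩ := starlike_sqrt g hg
  set E := exp (th * I) with hE
  have hEne : E ≠ 0 := exp_ne_zero _
  have hEn : ‖E‖ = 1 := Complex.norm_exp_ofReal_mul_I th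
  set p : ℂ → ℂ := fun z => deriv f z / q z ^ 2 with hp
  have hpd : DifferentiableOn ℂ p (ball 0 1) :=
    (hfd.deriv isOpen_ball).div (hqd.pow 2) (fun z hz => pow_ne_zero 2 (hqne z hz))
  have hp0 : p 0 = 1 := by simp [hp, hf1, hq0]
  have hEp : ∀ z ∈ ball (0 : ℂ) 1 \ {0}, 0 < (E * p z).re := by
    intro z hz
    have h1 := hre z hz
    have hz0 : z ≠ 0 := hz.2
    have hq := hqne z hz.1
    rw [← hqg z hz.1] at h1
    have : E * z * deriv f z / (z * q z ^ 2) = E * p z := by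
      simp only [hp]
      field_simp
    rwa [this] at h1
  have hcos : 0 < E.re := by
    have := cos_pos_of_re_pos (fun z => E * p z) (hpd.const_mul E) hEp
    simpa [hp0] using this
  have hEp' : ∀ z ∈ ball (0 : ℂ) 1, 0 < (E * p z).re := by
    intro z hz
    rcases eq_or_ne z 0 with rfl | h
    · simpa [hp0] using hcos
    · exact hEp z ⟨hz, h⟩
  -- `1 + e = 2 Re E / E`
  have hconj : E * starRingEnd ℂ E = 1 := by
    rw [Complex.mul_conj, ← Complex.sq_norm, hEn]; simp
  set e : ℂ := starRingEnd ℂ E * starRingEnd ℂ E with he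
  have hcosc : (E.re : ℂ) ≠ 0 := by exact_mod_cast hcos.ne'
  have hka : E * (1 + e) = 2 * E.re := by
    have : E + starRingEnd ℂ E = ((2 * E.re : ℝ) : ℂ) := Complex.add_conj E
    push_cast at this
    rw [he]
    linear_combination this + starRingEnd ℂ E * hconj
  have hkane : 1 + e ≠ 0 := by
    intro h
    rw [h, mul_zero] at hka
    have := hka.symm
    simp at this
    exact hcos.ne' this
  refine ⟨q, fun z => 1 + (p z - 1) / (1 + e), e, ?_, hqd, hq0, hqre, ?_, ?_, ?_, ?_⟩
  · simp [he, hEn]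
  · exact ((hpd.sub_const 1).div_const _).const_add 1
  · simp [hp0]
  · intro z hz
    have h1 : (p z - 1) / (1 + e) = (((2 * E.re)⁻¹ : ℝ) : ℂ) * (E * p z - E) := by
      have : 1 + e = 2 * E.re / E := by
        field_simp
        linear_combination hka
      rw [this]
      push_cast
      field_simp
    have h2 := hEp' z hz
    rw [add_re, h1, re_ofReal_mul, sub_re, one_re]
    have h3 : (2 * E.re)⁻¹ * ((E * p z).re - E.re) = (2 * E.re)⁻¹ * (E * p z).re - 1 / 2 := by
      field_simp
    rw [h3]
    have : 0 < (2 * E.re)⁻¹ * (E * p z).re := by positivity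
    linarith
  · intro z hz
    have hq := hqne z hz
    have : (1 - (1 + e)) + (1 + e) * (1 + (p z - 1) / (1 + e)) = p z := by
      field_simp
      ring
    simp only [this]
    simp only [hp]
    field_simp

lemma deriv_taylorCoeff_triple (f q P : ℂ → ℂ) (e : ℂ) (hq : DifferentiableOn ℂ q (ball 0 1))
    (hP : DifferentiableOn ℂ P (ball 0 1)) (hP0 : P 0 = 1)
    (h : ∀ z ∈ ball (0 : ℂ) 1, deriv f z = q z * (q z * ((1 - (1 + e)) + (1 + e) * P z)))
    (n : ℕ) :
    taylorCoeff (deriv f) n = tripleCoeff (taylorCoeff q) (taylorCoeff q)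
      (fun k => if k = 0 then taylorCoeff P 0 else (1 + e) * taylorCoeff P k) n := by
  have hp : DifferentiableOn ℂ (fun z => (1 - (1 + e)) + (1 + e) * P z) (ball 0 1) :=
    (hP.const_mul _).const_add _
  rw [taylorCoeff_congr (deriv f) (q * (q * fun z => (1 - (1 + e)) + (1 + e) * P z)) h,
    taylorCoeff_mul _ _ hq (hq.mul hp)]
  refine Finset.sum_congr rfl fun i _ => ?_
  rw [taylorCoeff_mul _ _ hq hp]
  congr 1
  refine Finset.sum_congr rfl fun j _ => ?_
  congr 1
  beta_reduce
  split_ifs with hk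
  · rw [hk]
    simp [taylorCoeff, hP0]
  · exact taylorCoeff_affine P _ _ (Nat.pos_of_ne_zero hk)

lemma support_ineq (lam t : ℝ) (h0 : 0 < lam) (h1 : lam ≤ 8 / 13) (om : ℂ) (hom : ‖om‖ = 1)
    (f : ℂ → ℂ) (hf : IsCloseToConvex f) :
    (om ^ 2 * taylorCoeff f 7 - 2 * I * lam * t * om * taylorCoeff f 4).re
      ≤ 7 + lam * t ^ 2 := by
  obtain ⟨q, P, e, he, hq, hq0, hqre, hP, hP0, hPre, hder⟩ := closeToConvex_structure f hf
  have key := herglotz_trilinear q P hq hq0 hqre hP hP0 hPre 7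
    (zalcWeight (om ^ 2 / 7) (-(I * lam * t * om / 2)) (1 + e)) (7 + lam * t ^ 2) (by
      intro b c d hb hc hd
      rw [zalcWeight_sum _ _ _ (fun i => c ^ i) (fun i => d ^ i) (fun i => b ^ i),
        tripleCoeff_kernel_six, tripleCoeff_kernel_three]
      have := kernel_ineq lam t h0 h1 om (-e * b) b c d hom (by simp [he, hb]) hb.le hc.le hd.le
      refine le_trans (le_of_eq ?_) this
      congr 1
      ring)
  rw [zalcWeight_sum, ← deriv_taylorCoeff_triple f q P e hq hP hP0 hder,
    ← deriv_taylorCoeff_triple f q P e hq hP hP0 hder] at key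
  rw [taylorCoeff_succ_deriv f 6, taylorCoeff_succ_deriv f 3]
  refine le_trans (le_of_eq ?_) key
  congr 1
  push_cast
  ring

theorem generalized_zalcman_closeToConvex_n4_small_lambda
    (lam : ℝ) (hlam1 : 0 < lam) (hlam2 : lam ≤ 8 / 13)
    (f : ℂ → ℂ) (hf : IsCloseToConvex f) :
    ‖(lam : ℂ) * (taylorCoeff f 4) ^ 2 - taylorCoeff f 7‖ ≤ 7 := by
  set a := taylorCoeff f 4 with ha
  set b := taylorCoeff f 7 with hb
  rw [norm_sub_rev]
  set D := b - lam * a ^ 2 with hD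
  set om := exp (((-(arg D) / 2 : ℝ) : ℂ) * I) with hom
  have homn : ‖om‖ = 1 := Complex.norm_exp_ofReal_mul_I _
  have hrot : om ^ 2 * D = (‖D‖ : ℂ) := by
    conv_lhs => rw [← Complex.norm_mul_exp_arg_mul_I D]
    rw [hom, ← Complex.exp_nat_mul, mul_left_comm, ← Complex.exp_add]
    have : ((2 : ℕ) : ℂ) * (((-(arg D) / 2 : ℝ) : ℂ) * I) + (arg D : ℂ) * I = 0 := by
      push_cast; ring
    rw [this]; simp
  have hs := support_ineq lam (om * a).im hlam1 hlam2 om homn f hf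
  rw [← ha, ← hb] at hs
  have h1 : ‖D‖ = (om ^ 2 * b).re - lam * ((om * a).re ^ 2 - (om * a).im ^ 2) := by
    have h2 : (om ^ 2 * D).re = ‖D‖ := by rw [hrot]; simp
    have h3 : om ^ 2 * D = om ^ 2 * b - (lam : ℂ) * (om * a) ^ 2 := by rw [hD]; ring
    rw [← h2, h3, sub_re, re_ofReal_mul, pow_two (om * a), mul_re (om * a)]
    ring
  have h4 : (om ^ 2 * b - 2 * I * lam * (om * a).im * om * a).re
      = (om ^ 2 * b).re + 2 * lam * (om * a).im ^ 2 := by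
    have h5 : 2 * I * lam * (om * a).im * om * a
        = ((2 * lam * (om * a).im : ℝ) : ℂ) * (I * (om * a)) := by push_cast; ring
    rw [h5, sub_re, re_ofReal_mul, I_mul_re]
    ring
  rw [h4] at hs
  rw [h1]
  nlinarith [mul_nonneg hlam1.le (sq_nonneg (om * a).re)]
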